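/- Let k ≥ 1. For every permutation σ of {0,1,…,k} and all natural numbers a_0,…,a_k, the number of tuples P ∈ P^k(T,B) with h_i(P) = a_i for all 0 ≤ i ≤ k equals the number of tuples P ∈ P^k(T,B) with h_i(P) = a_{σ(i)} for all 0 ≤ i ≤ k. (The joint distribution of (h_0,…,h_k) over P^k(T,B) is symmetric.) -/

import Mathlib

/-- A path `P` lies in `P(T,B)`: it is weakly increasing (monotone) and lies
weakly between the boundaries `B` and `T`. -/
def InP {x y : ℕ} (T B P : Fin x → Fin (y+1)) : Prop :=
  Monotone P ∧ ∀ j, B j ≤ P j ∧ P j ≤ T j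

/-- A `k`-tuple of paths lies in `P^k(T,B)`: every path lies in `P(T,B)` and
each path lies weakly above the next one. -/
def InPk {x y k : ℕ} (T B : Fin x → Fin (y+1)) (P : Fin k → Fin x → Fin (y+1)) : Prop :=
  (∀ i, InP T B (P i)) ∧
  ∀ (i : Fin k) (hi : (i : ℕ) + 1 < k) (j : Fin x), P ⟨(i : ℕ) + 1, hi⟩ j ≤ P i j

/-- The extended tuple, with the conventions `P_0 = T` and `P_{k+1} = B`. -/
def extP {x y k : ℕ} (T B : Fin x → Fin (y+1)) (P : Fin k → Fin x → Fin (y+1))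
    (i : Fin (k+2)) : Fin x → Fin (y+1) :=
  if h0 : (i : ℕ) = 0 then T
  else if hk1 : (i : ℕ) = k + 1 then B
  else P ⟨(i : ℕ) - 1, by have := i.isLt; omega⟩

/-- `hstat T B P i` is the number of east steps shared by `P_i` and `P_{i+1}`
(with the conventions `P_0 = T`, `P_{k+1} = B`). -/
noncomputable def hstat {x y k : ℕ} (T B : Fin x → Fin (y+1))
    (P : Fin k → Fin x → Fin (y+1)) (i : Fin (k+1)) : ℕ :=
  Nat.card {j : Fin x // extP T B P i.castSucc j = extP T B P i.succ j}

/-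
Let `M s` be the matrix whose rows and columns are indexed by paths and whose entry at `(U, L)` is
`s` to the number of east steps shared by `U` and `L` if `L` lies weakly below `U`, and `0`
otherwise. The `(T, B)` entry of `M (X (σ 0)) * ⋯ * M (X (σ k))` is the sum of
`∏ i, X (σ i) ^ h_i(P)` over `P` in `P^k(T,B)`, so symmetry of the joint distribution follows once
these matrices commute. The `(T, B)` entry of `M s * M t` counts single paths between `T` and `B`,
`s` marking contacts with `T` and `t` contacts with `B`. Cut off after `n` columns, this generating
function satisfies a recursion whose shape depends only on the gap `T n - B n` (zero, one, or at
least two) and whose coefficients are symmetric in `s` and `t`; in the last case `T` is lowered.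
-/

section TupleOrder

variable {α : Type*} [Preorder α] {n : ℕ} {f : Fin n → α} {a : α}

theorem monotone_snoc_iff :
    Monotone (Fin.snoc f a : Fin (n + 1) → α) ↔ Monotone f ∧ ∀ i, f i ≤ a := by
  simp only [Monotone, Fin.forall_fin_succ', Fin.snoc_castSucc, Fin.snoc_last,
    Fin.castSucc_le_castSucc_iff, Fin.le_last, Fin.last_le_iff, Fin.castSucc_ne_last,
    forall_true_left, le_refl, and_true, IsEmpty.forall_iff, implies_true, forall_and]

theorem antitone_snoc_iff :
    Antitone (Fin.snoc f a : Fin (n + 1) → α) ↔ Antitone f ∧ ∀ i, a ≤ f i :=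
  monotone_snoc_iff (α := αᵒᵈ)

theorem antitone_cons_iff :
    Antitone (Fin.cons a f : Fin (n + 1) → α) ↔ (∀ i, f i ≤ a) ∧ Antitone f := by
  simp [Antitone, Fin.forall_fin_succ, forall_and]

theorem antitone_iff_consecutive :
    Antitone f ↔ ∀ (i : Fin n) (hi : (i : ℕ) + 1 < n), f ⟨i + 1, hi⟩ ≤ f i := by
  cases n with
  | zero => simp [Subsingleton.antitone]
  | succ n =>
    rw [Fin.antitone_iff_succ_le]
    exact ⟨fun h i hi ↦ h ⟨i, Nat.lt_of_succ_lt_succ hi⟩,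
      fun h i ↦ h i.castSucc (Nat.succ_lt_succ i.is_lt)⟩

theorem exists_monotone_nat_extension (hf : Monotone f) (hfa : ∀ i, f i ≤ a) :
    ∃ g : ℕ → α, Monotone g ∧ ∀ i : Fin n, g i = f i := by
  refine ⟨fun i ↦ if h : i < n then f ⟨i, h⟩ else a, fun i j hij ↦ ?_, fun i ↦ by simp⟩
  by_cases hj : j < n
  · simpa only [hj, hij.trans_lt hj, dite_true] using hf (Fin.mk_le_mk.2 hij)
  · simp only [hj, dite_false]
    split_ifs
    · exact hfa _
    · exact le_rfl

end TupleOrder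

section MonotoneSum

variable {R : Type*} [CommSemiring R]

/-- The sum of `∏ j < n, w j (h j)` over all weakly increasing sequences
`h 0 ≤ ⋯ ≤ h (n - 1) ≤ v` of natural numbers, computed by splitting off the last term. -/
def monotoneSum (w : ℕ → ℕ → R) : ℕ → ℕ → R
  | 0, _ => 1
  | n + 1, v => ∑ u ∈ Finset.range (v + 1), w n u * monotoneSum w n u

theorem monotoneSum_congr {w w' : ℕ → ℕ → R} {n v : ℕ}
    (h : ∀ m < n, ∀ u ≤ v, w m u = w' m u) : monotoneSum w n v = monotoneSum w' n v := by
  induction n generalizing v with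
  | zero => rfl
  | succ n ih =>
    refine Finset.sum_congr rfl fun u hu ↦ ?_
    have huv : u ≤ v := Finset.mem_range_succ_iff.1 hu
    rw [h n n.lt_succ_self u huv,
      ih fun m hm u' hu' ↦ h m (hm.trans n.lt_succ_self) u' (hu'.trans huv)]

theorem monotoneSum_eq_of_le {w : ℕ → ℕ → R} {n v v' : ℕ} (hv : v ≤ v')
    (h : ∀ m < n, ∀ u, v < u → w m u = 0) : monotoneSum w n v' = monotoneSum w n v := by
  cases n with
  | zero => rfl
  | succ n =>
    refine (Finset.sum_subset (Finset.range_mono (by omega)) fun u _ hu ↦ ?_).symm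
    rw [h n n.lt_succ_self u (by simpa using hu), zero_mul]

open Classical in
theorem sum_monotone_prod_eq_monotoneSum (w : ℕ → ℕ → R) {y n : ℕ} (v : Fin (y + 1)) :
    ∑ P : Fin n → Fin (y + 1), (if Monotone P ∧ ∀ j, P j ≤ v then ∏ j : Fin n, w j (P j) else 0) =
      monotoneSum w n v := by
  induction n generalizing v with
  | zero => simp [monotoneSum, Subsingleton.monotone]
  | succ n ih =>
    have split (u : Fin (y + 1)) (P : Fin n → Fin (y + 1)) :
        (Monotone (Fin.snoc P u : Fin (n + 1) → Fin (y + 1)) ∧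
          ∀ j, (Fin.snoc P u : Fin (n + 1) → Fin (y + 1)) j ≤ v) ↔
        u ≤ v ∧ Monotone P ∧ ∀ j, P j ≤ u := by
      simp only [monotone_snoc_iff, Fin.forall_fin_succ', Fin.snoc_castSucc, Fin.snoc_last]
      exact ⟨fun h ↦ ⟨h.2.2, h.1⟩, fun h ↦ ⟨h.2, fun j ↦ (h.2.2 j).trans h.1, h.1⟩⟩
    have range_eq : Finset.range (v + 1) = (Finset.range (y + 1)).filter (· ≤ (v : ℕ)) := by
      ext u
      simp only [Finset.mem_range, Finset.mem_filter]
      omega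
    rw [monotoneSum, range_eq, Finset.sum_filter, ← Fin.sum_univ_eq_sum_range
        fun u ↦ if u ≤ (v : ℕ) then w n u * monotoneSum w n u else 0,
      ← (Fin.snocEquiv fun _ ↦ Fin (y + 1)).sum_comp, Fintype.sum_prod_type]
    refine Finset.sum_congr rfl fun u _ ↦ ?_
    simp only [Fin.snocEquiv, Equiv.coe_fn_mk, split, Fin.prod_univ_castSucc, Fin.snoc_castSucc,
      Fin.snoc_last, Fin.val_castSucc, Fin.val_last, ite_and, ← ih u, Fin.val_fin_le]
    split_ifs with huv
    · simp [Finset.mul_sum, mul_comm]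
    · simp

end MonotoneSum

section ContactWeight

variable {R : Type*} [Zero R] [One R] {α : Type*} [LinearOrder α]

/-- The weight of one column in which the upper path has height `a` and the lower path height `b`:
a shared east step is marked by `s`, and paths in the wrong order have weight `0`. -/
def contactWeight (s : R) (a b : α) : R :=
  if b < a then 1 else if b = a then s else 0

@[simp]
theorem contactWeight_self (s : R) (a : α) : contactWeight s a a = s := by
  simp [contactWeight]

theorem contactWeight_of_lt (s : R) {a b : α} (h : b < a) : contactWeight s a b = 1 :=
  if_pos h

theorem contactWeight_of_gt (s : R) {a b : α} (h : a < b) : contactWeight s a b = 0 := by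
  simp [contactWeight, h.not_gt, h.ne']

theorem contactWeight_val {m : ℕ} (s : R) (a b : Fin m) :
    contactWeight s (a : ℕ) b = contactWeight s a b := by
  simp only [contactWeight, Fin.val_fin_lt, Fin.val_inj]

theorem contactWeight_eq_ite (s : R) (a b : α) :
    contactWeight s a b = if b ≤ a then (if a = b then s else 1) else 0 := by
  rcases lt_trichotomy a b with h | rfl | h
  · simp [contactWeight_of_gt s h, h.not_ge]
  · simp
  · simp [contactWeight_of_lt s h, h.le, h.ne']

/-- The number of east steps shared by two paths. -/
noncomputable def sharedSteps {ι β : Type*} (U L : ι → β) : ℕ :=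
  Nat.card {j // U j = L j}

open Classical in
theorem prod_contactWeight {R ι : Type*} [CommSemiring R] [Fintype ι] (s : R) (U L : ι → α) :
    ∏ j, contactWeight s (U j) (L j) = if L ≤ U then s ^ sharedSteps U L else 0 := by
  have card_eq : sharedSteps U L = Finset.card {j | U j = L j} := by
    rw [sharedSteps, Nat.card_eq_fintype_card, Fintype.card_subtype]
  simp_rw [contactWeight_eq_ite, Fintype.prod_ite_zero]
  rw [Finset.prod_ite, Finset.prod_const, Finset.prod_const_one, mul_one, card_eq]
  simp only [Pi.le_def]

end ContactWeight

section BoundarySum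

variable {R : Type*} [CommSemiring R]

/-- The generating function of the first `n` east steps of the paths between `B` and `T` whose
height is at most `v`, with `s` marking the steps shared with `T` and `t` those shared with `B`. -/
def boundarySum (s t : R) (T B : ℕ → ℕ) (n v : ℕ) : R :=
  monotoneSum (fun m u ↦ contactWeight s (T m) u * contactWeight t u (B m)) n v

variable (s t : R) {T B : ℕ → ℕ} {n c : ℕ}

theorem boundarySum_eq_of_le {v v' : ℕ} (hv : v ≤ v') (h : ∀ m < n, T m ≤ v) :
    boundarySum s t T B n v' = boundarySum s t T B n v :=
  monotoneSum_eq_of_le hv fun m hm u hu ↦ by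
    rw [contactWeight_of_gt s ((h m hm).trans_lt hu), zero_mul]

theorem boundarySum_succ (v : ℕ) :
    boundarySum s t T B (n + 1) v = ∑ u ∈ Finset.range (v + 1),
      contactWeight s (T n) u * contactWeight t u (B n) * boundarySum s t T B n u :=
  rfl

theorem boundarySum_succ_of_lt (h : c < B n) : boundarySum s t T B (n + 1) c = 0 :=
  (boundarySum_succ s t c).trans <| Finset.sum_eq_zero fun u hu ↦ by
    rw [contactWeight_of_gt t ((Finset.mem_range_succ_iff.1 hu).trans_lt h), mul_zero, zero_mul]

theorem boundarySum_succ_bottom :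
    boundarySum s t T B (n + 1) (B n) =
      contactWeight s (T n) (B n) * t * boundarySum s t T B n (B n) := by
  rw [boundarySum_succ, Finset.sum_range_succ, contactWeight_self]
  refine (congrArg (· + _) (Finset.sum_eq_zero fun u hu ↦ ?_)).trans (zero_add _)
  rw [contactWeight_of_gt t (Finset.mem_range.1 hu), mul_zero, zero_mul]

theorem boundarySum_succ_succ (h : B n ≤ c) :
    boundarySum s t T B (n + 1) (c + 1) = boundarySum s t T B (n + 1) c +
      contactWeight s (T n) (c + 1) * boundarySum s t T B n (c + 1) := by
  rw [boundarySum_succ, Finset.sum_range_succ, contactWeight_of_lt t (Nat.lt_succ_of_le h), mul_one,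
    boundarySum_succ]

theorem boundarySum_succ_top (hc : T n = c + 1) (h : B n ≤ c) :
    boundarySum s t T B (n + 1) (c + 1) =
      boundarySum s t T B (n + 1) c + s * boundarySum s t T B n (c + 1) := by
  rw [boundarySum_succ_succ s t h, hc, contactWeight_self]

theorem boundarySum_min_const {v : ℕ} (h : v < c ∨ ∀ m < n, T m ≤ c) :
    boundarySum s t (fun m ↦ min (T m) c) B n v = boundarySum s t T B n v := by
  refine monotoneSum_congr fun m hm u hu ↦ ?_
  have : contactWeight s (min (T m) c) u = contactWeight s (T m) u := by
    rcases h with h | h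
    · simp only [contactWeight, lt_min_iff, eq_comm (a := u), min_eq_iff]
      grind
    · rw [min_eq_left (h m hm)]
  rw [this]

theorem boundarySum_gap_zero (h : T n = B n) :
    boundarySum s t T B (n + 1) (T n) = s * t * boundarySum s t T B n (T n) := by
  rw [h, boundarySum_succ_bottom, h, contactWeight_self]

theorem boundarySum_gap_one (h : T n = B n + 1) :
    boundarySum s t T B (n + 1) (T n) =
      s * boundarySum s t T B n (T n) + t * boundarySum s t T B n (B n) := by
  rw [h, boundarySum_succ_top s t h le_rfl, boundarySum_succ_bottom,
    contactWeight_of_lt s (h ▸ Nat.lt_succ_self _), one_mul, add_comm]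

theorem boundarySum_gap_one_rise (h : T n = B n + 1) (hlt : ∀ m < n, T m < T n) :
    boundarySum s t T B (n + 1) (T n) = (s + t) * boundarySum s t T B n (T n) := by
  have hle : ∀ m < n, T m ≤ B n := fun m hm ↦ by have := hlt m hm; omega
  rw [boundarySum_gap_one s t h, boundarySum_eq_of_le s t (by omega : B n ≤ T n) hle]
  ring

end BoundarySum

section BoundarySumSymmetry

variable {R : Type*} [CommRing R] (s t : R) {T B : ℕ → ℕ} {n c : ℕ}

theorem boundarySum_gap_one_plateau (hB : Monotone B) (h : T (n + 1) = B (n + 1) + 1)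
    (hplateau : T n = T (n + 1)) :
    boundarySum s t T B (n + 2) (T (n + 1)) =
      (s + t) * boundarySum s t T B (n + 1) (T n) - s * t * boundarySum s t T B n (T n) := by
  have top := boundarySum_succ_top s t (hplateau.trans h) (hB n.le_succ)
  rw [boundarySum_gap_one s t h, hplateau, h, top]
  ring

theorem boundarySum_sub_lowered (hc : T n = c + 1) (h : B n < c) :
    boundarySum s t T B (n + 1) (c + 1) - boundarySum s t (fun m ↦ min (T m) c) B (n + 1) c =
      boundarySum s t T B n c + s * (boundarySum s t T B n (c + 1) -
        boundarySum s t (fun m ↦ min (T m) c) B n c) := by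
  obtain ⟨d, rfl⟩ := Nat.exists_eq_add_one_of_ne_zero h.ne_bot
  have hd : B n ≤ d := Nat.le_of_lt_succ h
  have top := boundarySum_succ_top s t hc h.le
  have interior := boundarySum_succ_succ s t (T := T) hd
  have top_lowered := boundarySum_succ_top s t (T := fun m ↦ min (T m) (d + 1)) (by simp [hc]) hd
  rw [hc, contactWeight_of_lt s (Nat.lt_succ_self _), one_mul] at interior
  rw [boundarySum_min_const s t (.inl (Nat.lt_succ_self d))] at top_lowered
  linear_combination top + interior - top_lowered

theorem boundarySum_gap_ge_two (hT : Monotone T) (hB : Monotone B) (hc : T n = c + 1)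
    (h : B n < c) :
    boundarySum s t T B (n + 1) (c + 1) =
      boundarySum s t (fun m ↦ min (T m) c) B (n + 1) c + boundarySum s t T B n (c + 1) := by
  have sub_lowered := boundarySum_sub_lowered s t hc h
  induction n with
  | zero => simpa [boundarySum, monotoneSum, sub_eq_iff_eq_add'] using sub_lowered
  | succ n ih =>
    by_cases hTn : T n ≤ c
    · have hle : ∀ m < n + 1, T m ≤ c := fun m hm ↦ (hT (Nat.le_of_lt_succ hm)).trans hTn
      have lowered_eq := boundarySum_min_const s t (B := B) (v := c) (.inr hle)
      have eq_of_le := boundarySum_eq_of_le s t (B := B) c.le_succ hle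
      linear_combination sub_lowered + (s - 1) * eq_of_le - s * lowered_eq
    · -- Along the plateau of `T` at height `c + 1` the difference of the two generating functions
      -- obeys the recursion `boundarySum_succ_top`, with the index shifted by one.
      have hTn : T n = c + 1 := le_antisymm (hc ▸ hT n.le_succ) (not_le.1 hTn)
      have hBn : B n < c := (hB n.le_succ).trans_lt h
      have sub_lowered_pred := ih hTn hBn (boundarySum_sub_lowered s t hTn hBn)
      linear_combination sub_lowered + s * sub_lowered_pred - boundarySum_succ_top s t hTn hBn.le

theorem boundarySum_comm {T : ℕ → ℕ} (hT : Monotone T) (hB : Monotone B) {n v : ℕ}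
    (hv : ∀ m < n, T m ≤ v) : boundarySum s t T B n v = boundarySum t s T B n v := by
  match n with
  | 0 => rfl
  | n + 1 =>
    have hTn : ∀ m < n + 1, T m ≤ T n := fun m hm ↦ hT (Nat.le_of_lt_succ hm)
    rw [boundarySum_eq_of_le s t (hv n n.lt_succ_self) hTn,
      boundarySum_eq_of_le t s (hv n n.lt_succ_self) hTn]
    have ih : boundarySum s t T B n (T n) = boundarySum t s T B n (T n) :=
      boundarySum_comm hT hB fun m hm ↦ hT hm.le
    obtain hlt | heq | hone | htwo :
        T n < B n ∨ T n = B n ∨ T n = B n + 1 ∨ B n + 2 ≤ T n := by omega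
    · rw [boundarySum_succ_of_lt s t hlt, boundarySum_succ_of_lt t s hlt]
    · rw [boundarySum_gap_zero s t heq, boundarySum_gap_zero t s heq, ih, mul_comm s t]
    · by_cases hrise : ∀ m < n, T m < T n
      · rw [boundarySum_gap_one_rise s t hone hrise, boundarySum_gap_one_rise t s hone hrise, ih,
          add_comm s t]
      · obtain ⟨n, rfl, hplateau⟩ : ∃ m, n = m + 1 ∧ T m = T (m + 1) := by
          push Not at hrise
          obtain ⟨m, hm, hTm⟩ := hrise
          obtain ⟨n, rfl⟩ := Nat.exists_eq_add_one_of_ne_zero hm.ne_bot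
          exact ⟨n, rfl, le_antisymm (hT n.le_succ) (hTm.trans (hT (Nat.le_of_lt_succ hm)))⟩
        have ih' : boundarySum s t T B n (T n) = boundarySum t s T B n (T n) :=
          boundarySum_comm hT hB fun m hm ↦ hT hm.le
        rw [← hplateau] at ih
        rw [boundarySum_gap_one_plateau s t hB hone hplateau,
          boundarySum_gap_one_plateau t s hB hone hplateau, ih, ih', add_comm s t, mul_comm s t]
    · obtain ⟨c, hc⟩ : ∃ c, T n = c + 1 := Nat.exists_eq_add_one_of_ne_zero (by omega)
      have hBc : B n < c := by omega
      have ih_lowered : boundarySum s t (fun m ↦ min (T m) c) B (n + 1) c =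
          boundarySum t s (fun m ↦ min (T m) c) B (n + 1) c :=
        boundarySum_comm (hT.min monotone_const) hB fun m _ ↦ min_le_right _ _
      rw [hc] at ih ⊢
      rw [boundarySum_gap_ge_two s t hT hB hc hBc, boundarySum_gap_ge_two t s hT hB hc hBc, ih,
        ih_lowered]
termination_by (n, T (n - 1))

end BoundarySumSymmetry

section MatrixProduct

/-- The tuple `a, P 0, …, P (k - 1), b`. -/
def withEndpoints {ι : Type*} {k : ℕ} (a : ι) (P : Fin k → ι) (b : ι) : Fin (k + 2) → ι :=
  Fin.cons a (Fin.snoc P b : Fin (k + 1) → ι)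

theorem withEndpoints_cons {ι : Type*} {k : ℕ} (a c : ι) (P : Fin k → ι) (b : ι) :
    withEndpoints a (Fin.cons c P : Fin (k + 1) → ι) b = Fin.cons a (withEndpoints c P b) := by
  simp only [withEndpoints, Fin.cons_snoc_eq_snoc_cons]

theorem prod_ofFn_matrix_apply {R ι : Type*} [CommSemiring R] [Fintype ι] [DecidableEq ι] {k : ℕ}
    (M : Fin (k + 1) → Matrix ι ι R) (a b : ι) :
    (List.ofFn M).prod a b = ∑ P : Fin k → ι,
      ∏ r, M r (withEndpoints a P b r.castSucc) (withEndpoints a P b r.succ) := by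
  induction k generalizing a with
  | zero => simp [withEndpoints, Fin.snoc]
  | succ k ih =>
    rw [List.ofFn_succ, List.prod_cons, Matrix.mul_apply,
      ← (Fin.consEquiv fun _ ↦ ι).sum_comp, Fintype.sum_prod_type]
    refine Finset.sum_congr rfl fun c _ ↦ ?_
    rw [ih, Finset.mul_sum]
    refine Finset.sum_congr rfl fun P _ ↦ ?_
    simp only [Fin.consEquiv, Equiv.coe_fn_mk, withEndpoints_cons]
    rw [Fin.prod_univ_succ (n := k + 1)]
    simp only [Fin.castSucc_zero, ← Fin.succ_castSucc, Fin.cons_zero, Fin.cons_succ]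
    rfl

end MatrixProduct

section TransferMatrix

variable {R : Type*} {x y : ℕ}

open Classical in
/-- The matrix indexed by paths in the `x × y` rectangle whose entry at `(U, L)` is
`s ^ sharedSteps U L` if `L` lies weakly below `U`. All functions serve as indices; those that are
not weakly increasing have zero rows and columns. -/
noncomputable def transferMatrix [CommSemiring R] (x y : ℕ) (s : R) :
    Matrix (Fin x → Fin (y + 1)) (Fin x → Fin (y + 1)) R :=
  .of fun U L ↦ if Monotone U ∧ Monotone L ∧ L ≤ U then s ^ sharedSteps U L else 0

theorem transferMatrix_mul_apply [CommRing R] (s t : R) {T B : Fin x → Fin (y + 1)}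
    (hT : Monotone T) (hB : Monotone B) {T' B' : ℕ → ℕ} (hTT' : ∀ j : Fin x, T' j = T j)
    (hBB' : ∀ j : Fin x, B' j = B j) :
    (transferMatrix x y s * transferMatrix x y t) T B = boundarySum s t T' B' x y := by
  classical
  rw [Matrix.mul_apply]
  refine Eq.trans ?_ (sum_monotone_prod_eq_monotoneSum _ (Fin.last y))
  refine Finset.sum_congr rfl fun P _ ↦ ?_
  simp only [transferMatrix, Matrix.of_apply, hT, hB, true_and, Fin.le_last, implies_true, and_true,
    hTT', hBB', contactWeight_val, Finset.prod_mul_distrib, prod_contactWeight]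
  by_cases hP : Monotone P <;> simp [hP]

theorem transferMatrix_commute [CommRing R] (s t : R) :
    Commute (transferMatrix x y s) (transferMatrix x y t) := by
  ext T B
  by_cases h : Monotone T ∧ Monotone B
  · obtain ⟨T', hT', hTT'⟩ := exists_monotone_nat_extension (Fin.val_strictMono.monotone.comp h.1)
      fun i ↦ (T i).is_le
    obtain ⟨B', hB', hBB'⟩ := exists_monotone_nat_extension (Fin.val_strictMono.monotone.comp h.2)
      fun i ↦ (B i).is_le
    rw [transferMatrix_mul_apply s t h.1 h.2 hTT' hBB',
      transferMatrix_mul_apply t s h.1 h.2 hTT' hBB']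
    exact boundarySum_comm s t hT' hB' fun m hm ↦ hTT' ⟨m, hm⟩ ▸ Fin.is_le _
  · rw [not_and_or] at h
    rcases h with h | h <;> simp [Matrix.mul_apply, transferMatrix, h]

theorem prod_ofFn_transferMatrix_perm [CommRing R] {k : ℕ} (s : Fin k → R)
    (σ : Equiv.Perm (Fin k)) :
    (List.ofFn fun i ↦ transferMatrix x y (s (σ i))).prod =
      (List.ofFn fun i ↦ transferMatrix x y (s i)).prod :=
  (σ.ofFn_comp_perm fun i ↦ transferMatrix x y (s i)).prod_eq' <|
    List.pairwise_ofFn.2 fun _ _ _ ↦ transferMatrix_commute _ _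

end TransferMatrix

section PathTuples

variable {x y k : ℕ} {T B : Fin x → Fin (y + 1)}

theorem extP_eq_withEndpoints (T B : Fin x → Fin (y + 1)) (P : Fin k → Fin x → Fin (y + 1)) :
    extP T B P = withEndpoints T P B := by
  funext i
  refine Fin.cases ?_ (fun i ↦ Fin.lastCases ?_ (fun i ↦ ?_) i) i
  · simp [extP, withEndpoints]
  · simp [extP, withEndpoints]
  · simp [extP, withEndpoints, i.is_lt.ne]

theorem inPk_iff_antitone (hT : Monotone T) (hB : Monotone B) (hTB : B ≤ T)
    (P : Fin k → Fin x → Fin (y + 1)) :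
    InPk T B P ↔ (∀ r, Monotone (extP T B P r)) ∧ Antitone (extP T B P) := by
  have consecutive : (∀ (i : Fin k) (hi : (i : ℕ) + 1 < k) (j : Fin x),
      P ⟨(i : ℕ) + 1, hi⟩ j ≤ P i j) ↔ Antitone P := by
    simp only [antitone_iff_consecutive, Pi.le_def]
  simp only [InPk, InP, consecutive, extP_eq_withEndpoints, withEndpoints, antitone_cons_iff,
    antitone_snoc_iff, Fin.forall_fin_succ (n := k + 1), Fin.forall_fin_succ', Fin.cons_zero,
    Fin.cons_succ, Fin.snoc_castSucc, Fin.snoc_last, hT, hB, hTB, true_and, and_true]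
  simp only [Pi.le_def, forall_and]
  tauto

theorem inPk_iff_forall_step (hT : Monotone T) (hB : Monotone B) (hTB : B ≤ T)
    (P : Fin k → Fin x → Fin (y + 1)) :
    InPk T B P ↔ ∀ i : Fin (k + 1), Monotone (extP T B P i.castSucc) ∧
      Monotone (extP T B P i.succ) ∧ extP T B P i.succ ≤ extP T B P i.castSucc := by
  rw [inPk_iff_antitone hT hB hTB, Fin.antitone_iff_succ_le, forall_and, forall_and, ← and_assoc]
  refine and_congr_left' ⟨fun h ↦ ⟨fun i ↦ h _, fun i ↦ h _⟩, fun h ↦ ?_⟩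
  exact Fin.forall_fin_succ.2 ⟨h.1 0, h.2⟩

open Classical in
theorem prod_transferMatrix_apply {R : Type*} [CommSemiring R] (s : Fin (k + 1) → R)
    (hT : Monotone T) (hB : Monotone B) (hTB : B ≤ T) :
    (List.ofFn fun i ↦ transferMatrix x y (s i)).prod T B =
      ∑ P : Fin k → Fin x → Fin (y + 1),
        if InPk T B P then ∏ i, s i ^ hstat T B P i else 0 := by
  rw [prod_ofFn_matrix_apply]
  refine Finset.sum_congr rfl fun P _ ↦ ?_
  simp only [← extP_eq_withEndpoints, transferMatrix, Matrix.of_apply, Fintype.prod_ite_zero,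
    inPk_iff_forall_step hT hB hTB]
  split_ifs <;> rfl

theorem coeff_prod_X_perm_pow {ι R : Type*} [Fintype ι] [CommSemiring R] (σ : Equiv.Perm ι)
    (e a : ι → ℕ) [Decidable (∀ i, e i = a (σ i))] :
    MvPolynomial.coeff (Finsupp.equivFunOnFinite.symm a)
        (∏ i, MvPolynomial.X (R := R) (σ i) ^ e i) =
      if ∀ i, e i = a (σ i) then 1 else 0 := by
  classical
  have reindex : ∏ i, MvPolynomial.X (R := R) (σ i) ^ e i =
      ∏ i, MvPolynomial.X i ^ e (σ.symm i) := by
    simp only [← Equiv.prod_comp σ fun i ↦ MvPolynomial.X i ^ e (σ.symm i), Equiv.symm_apply_apply]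
  rw [reindex, MvPolynomial.coeff_prod_X_pow]
  refine if_congr ?_ rfl rfl
  rw [Finsupp.ext_iff, ← σ.forall_congr_right]
  simp only [Finsupp.equivFunOnFinite_symm_apply_apply, Finsupp.indicator_apply, Finset.mem_univ,
    dite_true, Equiv.symm_apply_apply, eq_comm]

theorem coeff_prod_transferMatrix (σ : Equiv.Perm (Fin (k + 1))) (a : Fin (k + 1) → ℕ)
    (hT : Monotone T) (hB : Monotone B) (hTB : B ≤ T) :
    MvPolynomial.coeff (Finsupp.equivFunOnFinite.symm a)
        ((List.ofFn fun i ↦ transferMatrix x y (MvPolynomial.X (R := ℤ) (σ i))).prod T B) =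
      Nat.card {P : Fin k → Fin x → Fin (y + 1) //
        InPk T B P ∧ ∀ i, hstat T B P i = a (σ i)} := by
  classical
  rw [prod_transferMatrix_apply _ hT hB hTB, MvPolynomial.coeff_sum, Nat.card_eq_fintype_card,
    Fintype.card_subtype, Finset.natCast_card_filter]
  refine Finset.sum_congr rfl fun P _ ↦ ?_
  by_cases hP : InPk T B P
  · simp only [hP, if_true, true_and, coeff_prod_X_perm_pow]
  · simp only [hP, if_false, false_and, MvPolynomial.coeff_zero]

end PathTuples

/-- The joint distribution of `(h_0, …, h_k)` over `P^k(T,B)` is symmetric. -/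
theorem stmt2 {x y : ℕ} (k : ℕ) (hk : 1 ≤ k) (T B : Fin x → Fin (y+1))
    (hT : Monotone T) (hB : Monotone B) (hTB : ∀ j, B j ≤ T j)
    (σ : Equiv.Perm (Fin (k+1))) (a : Fin (k+1) → ℕ) :
    Nat.card {P : Fin k → Fin x → Fin (y+1) //
        InPk T B P ∧ ∀ i, hstat T B P i = a i}
    = Nat.card {P : Fin k → Fin x → Fin (y+1) //
        InPk T B P ∧ ∀ i, hstat T B P i = a (σ i)} := by
  have coeff_one := coeff_prod_transferMatrix 1 a hT hB hTB
  have coeff_perm := coeff_prod_transferMatrix σ a hT hB hTB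
  rw [prod_ofFn_transferMatrix_perm] at coeff_one coeff_perm
  exact_mod_cast coeff_one.symm.trans coeff_perm
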